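/- arXiv:1605.04575 — 2 statements merged into one kernel-verified Lean document; each statement's English description precedes it below -/
import Mathlib

section
/- Let T be a subcubic tree with γ*_e(T) = γ*_{e,f}(T) > 1. Then T does not contain a vertex u of degree 1 and a vertex w of degree 2 at distance 2 from each other. -/
open SimpleGraph Finset

variable {V : Type*}

/-- `(1/2)^(d-1)` for an extended natural `d`, with value `0` at `∞`. -/
noncomputable def halfPow (d : ℕ∞) : ℝ :=
  if d = ⊤ then 0 else 2 * (1 / 2 : ℝ) ^ d.toNat

/-- `(1/2)^(dist_G(u,v)-1)` using the ordinary graph distance. -/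
noncomputable def expw (G : SimpleGraph V) (u v : V) : ℝ :=
  2 * (1 / 2 : ℝ) ^ G.dist u v

/-- The modified distance `dist_{(G,D)}(u,v)`: minimum length of a path from `u` to `v`
whose only vertex in `D` is the endvertex `v` (`∞` if no such path exists). -/
noncomputable def mdist (G : SimpleGraph V) (D : Finset V) (u v : V) : ℕ∞ :=
  sInf ((fun p : G.Walk u v => (p.length : ℕ∞)) ''
    {p | p.IsPath ∧ v ∈ D ∧ ∀ w ∈ p.support, w ∈ D → w = v})

/-- `w_{(G,D)}(u)`. -/
noncomputable def wblock (G : SimpleGraph V) (D : Finset V) (u : V) : ℝ :=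
  ∑ v ∈ D, halfPow (mdist G D u v)

/-- `w*_{(G,D)}(u)`. -/
noncomputable def wstar (G : SimpleGraph V) (D : Finset V) (u : V) : ℝ :=
  ∑ v ∈ D, expw G u v

def IsExpDomSet (G : SimpleGraph V) (D : Finset V) : Prop :=
  ∀ u : V, 1 ≤ wblock G D u

def IsPorousExpDomSet (G : SimpleGraph V) (D : Finset V) : Prop :=
  ∀ u : V, 1 ≤ wstar G D u

def IsDomSet (G : SimpleGraph V) (D : Finset V) : Prop :=
  ∀ v : V, v ∉ D → ∃ u ∈ D, G.Adj u v

/-- The exponential domination number `γ_e(G)`. -/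
noncomputable def gammaE (G : SimpleGraph V) [Fintype V] : ℕ :=
  sInf {k | ∃ D : Finset V, IsExpDomSet G D ∧ D.card = k}

/-- The porous exponential domination number `γ*_e(G)`. -/
noncomputable def gammaEStar (G : SimpleGraph V) [Fintype V] : ℕ :=
  sInf {k | ∃ D : Finset V, IsPorousExpDomSet G D ∧ D.card = k}

/-- The domination number `γ(G)`. -/
noncomputable def gammaDom (G : SimpleGraph V) [Fintype V] : ℕ :=
  sInf {k | ∃ D : Finset V, IsDomSet G D ∧ D.card = k}

/-- Feasibility for the LP relaxation of porous exponential domination. -/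
def FracFeasible (G : SimpleGraph V) [Fintype V] (x : V → ℝ) : Prop :=
  (∀ u, 0 ≤ x u) ∧ ∀ v : V, 1 ≤ ∑ u : V, expw G u v * x u

/-- The fractional porous exponential domination number `γ*_{e,f}(G)`. -/
noncomputable def gammaEF (G : SimpleGraph V) [Fintype V] : ℝ :=
  sInf {s | ∃ x : V → ℝ, FracFeasible G x ∧ s = ∑ u : V, x u}

/-- A graph is subcubic if all degrees are at most `3`. -/
def Subcubic (G : SimpleGraph V) [Fintype V] [DecidableRel G.Adj] : Prop :=
  ∀ v : V, G.degree v ≤ 3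



theorem exists_closer (G : SimpleGraph V) (hT : G.IsTree) {u r : V} (hur : u ≠ r) :
    ∃ t0, G.Adj u t0 ∧ G.dist u r = G.dist t0 r + 1 ∧
      ∀ t, G.Adj u t → t ≠ t0 → G.dist t r = G.dist u r + 1 := by
  obtain ⟨p, hp, hpl⟩ := hT.connected.exists_path_of_dist u r
  cases p with
  | nil => exact absurd rfl hur
  | cons h q =>
    rename_i t0
    refine ⟨t0, h, ?_, ?_⟩
    · have h1 : G.dist t0 r ≤ q.length := dist_le q
      have h2 := hT.dist_eq_dist_add_one_of_adj r h
      rw [dist_comm, G.dist_comm (u := r) (v := t0)] at h2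
      simp only [Walk.length_cons] at hpl
      omega
    · intro t ht hne
      have h2 := hT.dist_eq_dist_add_one_of_adj r ht
      rw [dist_comm, G.dist_comm (u := r) (v := t)] at h2
      rcases h2 with h2 | h2
      · exfalso
        obtain ⟨q', -, hq'⟩ := hT.connected.exists_path_of_dist t r
        have hpath : (Walk.cons ht q').IsPath := by
          apply Walk.isPath_of_length_eq_dist
          simp only [Walk.length_cons]
          omega
        have := (hT.existsUnique_path u r).unique hpath hp
        have h3 := congrArg Walk.snd this
        simp at h3
        exact hne h3
      · exact h2

theorem expw_comm (G : SimpleGraph V) (u v : V) : expw G u v = expw G v u := by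
  unfold expw; rw [dist_comm]

theorem expw_self (G : SimpleGraph V) (u : V) : expw G u u = 2 := by
  unfold expw; simp

/-- Local relation at a vertex different from the source. -/
theorem sum_nbr [Fintype V] (G : SimpleGraph V) [DecidableRel G.Adj] (hT : G.IsTree)
    {u r : V} (hur : u ≠ r) :
    ∑ t ∈ G.neighborFinset u, expw G t r = (3 + G.degree u) / 2 * expw G u r := by
  classical
  obtain ⟨t0, h0, hd0, hrest⟩ := exists_closer G hT hur
  have hm : t0 ∈ G.neighborFinset u := by simpa using h0
  rw [← Finset.add_sum_erase _ _ hm]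
  have h1 : ∑ t ∈ (G.neighborFinset u).erase t0, expw G t r
      = ∑ t ∈ (G.neighborFinset u).erase t0, expw G u r / 2 := by
    apply Finset.sum_congr rfl
    intro t ht
    simp only [Finset.mem_erase, mem_neighborFinset] at ht
    unfold expw
    rw [hrest t ht.2 ht.1, pow_succ]; ring
  have h2 : expw G t0 r = 2 * expw G u r := by
    unfold expw
    rw [hd0, pow_succ]; ring
  have hc : (((G.neighborFinset u).erase t0).card : ℝ) = G.degree u - 1 := by
    rw [← card_neighborFinset_eq_degree, ← Finset.card_erase_add_one hm]; push_cast; ring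
  rw [h1, Finset.sum_const, nsmul_eq_mul, hc, h2]; ring

theorem sum_nbr_self [Fintype V] (G : SimpleGraph V) [DecidableRel G.Adj] (r : V) :
    ∑ t ∈ G.neighborFinset r, expw G t r = G.degree r := by
  have : ∀ t ∈ G.neighborFinset r, expw G t r = 1 := by
    intro t ht
    have : G.dist t r = 1 := by
      rw [dist_eq_one_iff_adj]; exact ((mem_neighborFinset _ _ _).1 ht).symm
    unfold expw; rw [this]; norm_num
  rw [Finset.sum_congr rfl this]; simp

theorem sum_y [Fintype V] (G : SimpleGraph V) [DecidableRel G.Adj] (hT : G.IsTree) (r : V) :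
    ∑ u : V, expw G u r * ((3 - G.degree u) / 6) = 1 := by
  classical
  have hsw : ∑ u : V, ∑ t ∈ G.neighborFinset u, expw G t r = ∑ t : V, G.degree t * expw G t r := by
    rw [Finset.sum_comm' (t' := Finset.univ) (s' := fun t => G.neighborFinset t)]
    · simp
    · intro x y; simp [adj_comm]
  have hloc : ∀ u : V, ∑ t ∈ G.neighborFinset u, expw G t r =
      (3 + G.degree u) / 2 * expw G u r - if u = r then 3 else 0 := by
    intro u
    by_cases h : u = r
    · subst h; rw [sum_nbr_self, expw_self]; simp
    · rw [sum_nbr G hT h]; simp [h]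
  simp_rw [hloc] at hsw
  rw [Finset.sum_sub_distrib] at hsw
  simp only [Finset.sum_ite_eq', Finset.mem_univ, if_true] at hsw
  have e : ∑ u : V, expw G u r * ((3 - G.degree u) / 6) =
      (∑ u : V, (3 + G.degree u) / 2 * expw G u r - ∑ u : V, G.degree u * expw G u r) / 3 := by
    rw [← Finset.sum_sub_distrib, Finset.sum_div]
    apply Finset.sum_congr rfl; intros; ring
  rw [e]; linarith

theorem wstar_nbr [Fintype V] (G : SimpleGraph V) [DecidableRel G.Adj] (hT : G.IsTree)
    (D : Finset V) (u : V) (hu : u ∉ D) :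
    ∑ t ∈ G.neighborFinset u, wstar G D t = (3 + G.degree u) / 2 * wstar G D u := by
  unfold wstar
  rw [Finset.sum_comm, Finset.mul_sum]
  apply Finset.sum_congr rfl
  intro s hs
  exact sum_nbr G hT (fun h => hu (h ▸ hs))

theorem wstar_tight [Fintype V] (G : SimpleGraph V) [DecidableRel G.Adj]
    (hT : G.IsTree) (hsub : Subcubic G) (D : Finset V) (hD : IsPorousExpDomSet G D)
    (hle : (D.card : ℝ) ≤ gammaEF G) (v : V) (hv : G.degree v < 3) : wstar G D v = 1 := by
  classical
  have hy : ∀ u, (0 : ℝ) ≤ (3 - G.degree u) / 6 := by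
    intro u
    have : (G.degree u : ℝ) ≤ 3 := by exact_mod_cast hsub u
    linarith
  have h1 : gammaEF G ≤ ∑ u : V, (3 - (G.degree u : ℝ)) / 6 := by
    apply csInf_le
    · refine ⟨0, ?_⟩
      rintro s ⟨x, hx, rfl⟩
      exact Finset.sum_nonneg fun u _ => hx.1 u
    · exact ⟨_, ⟨hy, fun v => (sum_y G hT v).ge⟩, rfl⟩
  have h2 : ∑ u : V, wstar G D u * ((3 - (G.degree u : ℝ)) / 6) = D.card := by
    unfold wstar
    simp_rw [Finset.sum_mul]
    rw [Finset.sum_comm]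
    simp_rw [sum_y G hT]
    simp
  have h3 : ∑ u : V, (wstar G D u - 1) * ((3 - (G.degree u : ℝ)) / 6) ≤ 0 := by
    simp_rw [sub_mul, one_mul]
    rw [Finset.sum_sub_distrib, h2]; linarith
  have hnn : ∀ u ∈ (Finset.univ : Finset V), 0 ≤ (wstar G D u - 1) * ((3 - (G.degree u : ℝ)) / 6) :=
    fun u _ => mul_nonneg (by linarith [hD u]) (hy u)
  have h4 := (Finset.sum_eq_zero_iff_of_nonneg hnn).1 (le_antisymm h3 (Finset.sum_nonneg hnn)) v
    (Finset.mem_univ v)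
  have hv' : (G.degree v : ℝ) < 3 := by exact_mod_cast hv
  rcases mul_eq_zero.1 h4 with h | h <;> linarith

theorem not_mem_of_tight (G : SimpleGraph V) (D : Finset V) (v : V)
    (h : wstar G D v = 1) : v ∉ D := by
  intro hv
  have : expw G v v ≤ wstar G D v :=
    Finset.single_le_sum (f := fun s => expw G v s)
      (fun s _ => by unfold expw; positivity) hv
  rw [expw_self] at this
  linarith

/-- If `T` is a subcubic tree with `γ*_e(T) = γ*_{e,f}(T) > 1`, then `T` does not contain a
vertex of degree 1 and a vertex of degree 2 at distance 2 from each other. -/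
theorem stmt_9 {V : Type*} [Fintype V] (G : SimpleGraph V) [DecidableRel G.Adj]
    (hT : G.IsTree) (hsub : Subcubic G)
    (heq : (gammaEStar G : ℝ) = gammaEF G) (hgt : 1 < gammaEStar G) :
    ¬ ∃ u w : V, G.degree u = 1 ∧ G.degree w = 2 ∧ G.dist u w = 2 := by
  classical
  rintro ⟨u, w, hu, hw, huw⟩
  have hne : {k | ∃ D : Finset V, IsPorousExpDomSet G D ∧ D.card = k}.Nonempty := by
    by_contra h
    rw [Set.not_nonempty_iff_eq_empty] at h
    unfold gammaEStar at hgt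
    rw [h] at hgt
    simp at hgt
  obtain ⟨D, hD, hDc⟩ := Nat.sInf_mem hne
  change D.card = gammaEStar G at hDc
  have hle : (D.card : ℝ) ≤ gammaEF G := by rw [hDc, heq]
  have tight := wstar_tight G hT hsub D hD hle
  have tu := tight u (by omega)
  have tw := tight w (by omega)
  have nu := wstar_nbr G hT D u (not_mem_of_tight G D u tu)
  have nw := wstar_nbr G hT D w (not_mem_of_tight G D w tw)
  have hne : u ≠ w := by rintro rfl; simp at huw
  obtain ⟨v, huv, hvd, -⟩ := exists_closer G hT hne
  have hvw : G.Adj w v := by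
    rw [← dist_eq_one_iff_adj, dist_comm]; omega
  have hvu' : v ∈ G.neighborFinset u := by simpa using huv
  have hvw' : v ∈ G.neighborFinset w := by simpa using hvw
  rw [← Finset.add_sum_erase _ _ hvu', tu, hu] at nu
  rw [← Finset.add_sum_erase _ _ hvw', tw, hw] at nw
  have cu : ((G.neighborFinset u).erase v).card = 0 := by
    rw [Finset.card_erase_of_mem hvu', card_neighborFinset_eq_degree, hu]
  have cw : ((G.neighborFinset w).erase v).card = 1 := by
    rw [Finset.card_erase_of_mem hvw', card_neighborFinset_eq_degree, hw]
  rw [Finset.card_eq_zero.1 cu] at nu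
  obtain ⟨x, hx⟩ := Finset.card_eq_one.1 cw
  rw [hx] at nw
  simp only [Finset.sum_empty, Finset.sum_singleton] at nu nw
  have := hD x
  push_cast at nu nw
  linarith
end

section
/- Let G be a subcubic graph, D ⊆ V(G), and let u be a vertex of degree at most 2 in G. Then w_{(G,D)}(u) ≤ 2, with equality if and only if u is contained in a subgraph T of G that is a tree such that rooting T at u yields a full binary tree and D ∩ V(T) is exactly the set of leaves of T. -/
open SimpleGraph Finset

variable {V : Type*}

/-- `u` lies in a subgraph `H` of `G` that is a tree such that rooting `H` at `u` yields a full
binary tree whose set of leaves is exactly `D ∩ V(H)`.  (In an unrooted formulation: the root `u`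
has degree `0` or `2`, every other vertex has degree `1` or `3`, and the leaves are the vertices
with no child, i.e. the non-root vertices of degree `1`, together with `u` if it has degree `0`.) -/
def IsFullBinaryWitness {V : Type*} (G : SimpleGraph V) (D : Finset V) (u : V) : Prop :=
  ∃ H : G.Subgraph, u ∈ H.verts ∧ H.verts.Finite ∧ H.coe.IsTree ∧
    ((H.neighborSet u).ncard = 0 ∨ (H.neighborSet u).ncard = 2) ∧
    (∀ v ∈ H.verts, v ≠ u → (H.neighborSet v).ncard = 1 ∨ (H.neighborSet v).ncard = 3) ∧
    (↑D ∩ H.verts =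
      {v | v ∈ H.verts ∧ (H.neighborSet v).ncard ≤ 1 ∧
        (v = u → (H.neighborSet v).ncard = 0)})


/-- Vertices reached from `u` by a walk of length `n` whose non-final vertices avoid `D`. -/
def bR (G : SimpleGraph V) (D : Finset V) (u : V) : ℕ → Set V
  | 0 => {u}
  | n + 1 => {w | ∃ v ∈ bR G D u n, v ∉ D ∧ G.Adj v w}

open Classical in
/-- The `n`-th layer. -/
noncomputable def bS [Fintype V] (G : SimpleGraph V) (D : Finset V) (u : V) (n : ℕ) : Finset V :=
  univ.filter fun v => v ∈ bR G D u n ∧ ∀ m < n, v ∉ bR G D u m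

lemma bR_of_path {G : SimpleGraph V} {D : Finset V} {u : V} {x v : V} (p : G.Walk x v) (hp : p.IsPath)
    (h : ∀ w ∈ p.support, w ∈ D → w = v) {m : ℕ} (hx : x ∈ bR G D u m) :
    v ∈ bR G D u (m + p.length) := by
  induction p generalizing m with
  | nil => simpa using hx
  | @cons x y v ha p ih =>
    rw [Walk.cons_isPath_iff] at hp
    have := ih hp.1 (fun w hw => h w (by simp [hw])) (m := m + 1) ⟨x, hx, fun hD => ?_, ha⟩
    · rw [Walk.length_cons]; rwa [show m + (p.length + 1) = m + 1 + p.length by omega]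
    · have := h x (by simp) hD
      subst this
      exact hp.2 p.end_mem_support

lemma walk_of_bR {G : SimpleGraph V} {D : Finset V} {u : V} {n : ℕ} : ∀ {v : V}, v ∈ bR G D u n →
    ∃ p : G.Walk u v, p.length = n ∧ ∀ w ∈ p.support, w ∈ D → w = v := by
  induction n with
  | zero =>
    intro v hv
    have : v = u := hv
    subst this
    exact ⟨.nil, rfl, by simp⟩
  | succ n ih =>
    rintro v ⟨x, hx, hD, ha⟩
    obtain ⟨p, hp, h⟩ := ih hx
    refine ⟨p.concat ha, by simp [hp], fun w hw hwD => ?_⟩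
    rw [Walk.support_concat] at hw
    rcases (by simpa using hw : w ∈ p.support ∨ w = v) with h1 | h1
    · exact absurd (h w h1 hwD ▸ hwD) hD
    · exact h1

section layers

variable [Fintype V] {G : SimpleGraph V} {D : Finset V} {u : V}

lemma mem_bS {n : ℕ} {v : V} : v ∈ bS G D u n ↔ v ∈ bR G D u n ∧ ∀ m < n, v ∉ bR G D u m := by
  simp [bS]

lemma bS_zero : bS G D u 0 = {u} := by
  ext v; simp [mem_bS, bR]

lemma bS_unique {n m : ℕ} {v : V} (h1 : v ∈ bS G D u n) (h2 : v ∈ bS G D u m) : n = m := by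
  rw [mem_bS] at h1 h2
  rcases lt_trichotomy n m with h | h | h
  · exact absurd h1.1 (h2.2 _ h)
  · exact h
  · exact absurd h2.1 (h1.2 _ h)

lemma exists_bS_of_bR {n : ℕ} {v : V} (h : v ∈ bR G D u n) : ∃ m ≤ n, v ∈ bS G D u m := by
  classical
  have hex : ∃ n, v ∈ bR G D u n := ⟨n, h⟩
  exact ⟨Nat.find hex, Nat.find_min' hex h, mem_bS.2 ⟨Nat.find_spec hex, fun m hm => Nat.find_min hex hm⟩⟩

lemma bS_parent {n : ℕ} {w : V} (h : w ∈ bS G D u (n + 1)) :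
    ∃ v ∈ bS G D u n, v ∉ D ∧ G.Adj v w := by
  obtain ⟨⟨v, hv, hD, ha⟩, h2⟩ := mem_bS.1 h
  refine ⟨v, mem_bS.2 ⟨hv, fun m hm hvm => ?_⟩, hD, ha⟩
  exact h2 (m + 1) (by omega) ⟨v, hvm, hD, ha⟩

lemma bS_child {n : ℕ} {v w : V} (h : v ∈ bS G D u n) (hD : v ∉ D) (ha : G.Adj v w) :
    ∃ m ≤ n + 1, w ∈ bS G D u m :=
  exists_bS_of_bR (n := n + 1) ⟨v, (mem_bS.1 h).1, hD, ha⟩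

lemma bS_bound : ∃ N, ∀ n ≥ N, bS G D u n = ∅ := by
  classical
  have : ∀ v : V, ∃ k, ∀ n, v ∈ bS G D u n → n ≤ k := by
    intro v
    by_cases h : ∃ k, v ∈ bS G D u k
    · obtain ⟨k, hk⟩ := h
      exact ⟨k, fun n hn => (bS_unique hn hk).le⟩
    · push Not at h
      exact ⟨0, fun n hn => absurd hn (h n)⟩
  choose k hk using this
  refine ⟨univ.sup k + 1, fun n hn => Finset.eq_empty_of_forall_notMem fun v hv => ?_⟩
  have := hk v n hv
  have := Finset.le_sup (f := k) (mem_univ v)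
  omega

lemma mdist_of_bS {n : ℕ} {v : V} (hv : v ∈ D) (h : v ∈ bS G D u n) : mdist G D u v = n := by
  classical
  obtain ⟨h1, h2⟩ := mem_bS.1 h
  apply le_antisymm
  · obtain ⟨p, hp, hs⟩ := walk_of_bR h1
    have h3 : mdist G D u v ≤ (p.bypass.length : ℕ∞) := sInf_le ⟨p.bypass,
      ⟨p.bypass_isPath, hv, fun w hw => hs w (p.support_bypass_subset_support hw)⟩, rfl⟩
    have h4 := p.length_bypass_le_length
    refine h3.trans ?_
    rw [Nat.cast_le]; omega
  · apply le_sInf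
    rintro _ ⟨p, ⟨hp, -, hs⟩, rfl⟩
    have := bR_of_path (u := u) p hp hs (m := 0) rfl
    rw [zero_add] at this
    simp only [Nat.cast_le]
    by_contra hlt
    exact h2 _ (by omega) this

lemma mdist_top {v : V} (h : ∀ n, v ∉ bS G D u n) : mdist G D u v = ⊤ := by
  refine sInf_eq_top.2 ?_
  rintro _ ⟨p, ⟨hp, -, hs⟩, rfl⟩
  have := bR_of_path (u := u) p hp hs (m := 0) rfl
  obtain ⟨m, -, hm⟩ := exists_bS_of_bR this
  exact absurd hm (h m)

open Classical in
lemma wblock_eq {N : ℕ} (hN : ∀ n ≥ N, bS G D u n = ∅) :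
    wblock G D u = 2 * ∑ n ∈ range N, (((bS G D u n).filter (· ∈ D)).card : ℝ) * (1 / 2) ^ n := by
  have h1 : ∀ v ∈ D, halfPow (mdist G D u v) =
      ∑ n ∈ range N, if v ∈ bS G D u n then 2 * (1 / 2 : ℝ) ^ n else 0 := by
    intro v hv
    by_cases h : ∃ k, v ∈ bS G D u k
    · obtain ⟨k, hk⟩ := h
      have hkN : k < N := by
        by_contra hc
        rw [hN k (by omega)] at hk
        simp at hk
      rw [mdist_of_bS hv hk, Finset.sum_eq_single_of_mem k (mem_range.2 hkN)]
      · simp [halfPow, hk]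
      · intro n _ hn
        rw [if_neg fun h => hn (bS_unique h hk)]
    · push Not at h
      rw [mdist_top h]
      simp [halfPow, h]
  rw [wblock, Finset.sum_congr rfl h1, Finset.sum_comm, Finset.mul_sum]
  refine Finset.sum_congr rfl fun n _ => ?_
  rw [← Finset.sum_filter, Finset.sum_const, nsmul_eq_mul]
  have : D.filter (· ∈ bS G D u n) = (bS G D u n).filter (· ∈ D) := by
    ext; simp [and_comm]
  rw [this]; ring

open Classical in
/-- The potential function. -/
noncomputable def bF (G : SimpleGraph V) (D : Finset V) (u : V) (n : ℕ) : ℝ :=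
  ∑ k ∈ range n, (((bS G D u k).filter (· ∈ D)).card : ℝ) * (1 / 2) ^ k
    + ((bS G D u n).card : ℝ) * (1 / 2) ^ n

open Classical in
/-- The non-final vertices of a layer. -/
noncomputable def bA (G : SimpleGraph V) (D : Finset V) (u : V) (n : ℕ) : Finset V :=
  (bS G D u n).filter (· ∉ D)

lemma bF_zero : bF G D u 0 = 1 := by simp [bF, bS_zero]

lemma bF_succ (n : ℕ) : bF G D u (n + 1) =
    bF G D u n + (((bS G D u (n + 1)).card : ℝ) - 2 * (bA G D u n).card) * (1 / 2) ^ (n + 1) := by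
  classical
  have : (((bS G D u n).filter (· ∈ D)).card : ℝ) + (bA G D u n).card = (bS G D u n).card := by
    rw [bA]; exact_mod_cast Finset.card_filter_add_card_filter_not (s := bS G D u n) (· ∈ D)
  rw [bF, bF, Finset.sum_range_succ, ← this, pow_succ]; ring

lemma wblock_eq_bF {N : ℕ} (hN : ∀ n ≥ N, bS G D u n = ∅) : wblock G D u = 2 * bF G D u N := by
  rw [wblock_eq hN, bF, hN N le_rfl]; simp

lemma wblock_eq_two (h : ∀ n, (bS G D u (n + 1)).card = 2 * (bA G D u n).card) :
    wblock G D u = 2 := by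
  obtain ⟨N, hN⟩ := bS_bound (G := G) (D := D) (u := u)
  have : ∀ n, bF G D u n = 1 := by
    intro n
    induction n with
    | zero => exact bF_zero
    | succ n ih => rw [bF_succ, ih, h]; simp
  rw [wblock_eq_bF hN, this]; norm_num

lemma wblock_le_two (h : ∀ n, (bS G D u (n + 1)).card ≤ 2 * (bA G D u n).card) :
    wblock G D u ≤ 2 ∧
    (wblock G D u = 2 → ∀ n, (bS G D u (n + 1)).card = 2 * (bA G D u n).card) := by
  obtain ⟨N, hN⟩ := bS_bound (G := G) (D := D) (u := u)
  have hanti : Antitone (bF G D u) := by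
    refine antitone_nat_of_succ_le fun n => ?_
    rw [bF_succ]
    have h1 : ((bS G D u (n + 1)).card : ℝ) ≤ 2 * (bA G D u n).card := by exact_mod_cast h n
    have h2 : (0 : ℝ) < (1 / 2) ^ (n + 1) := by positivity
    nlinarith
  have h0 := hanti (Nat.zero_le N)
  rw [bF_zero] at h0
  rw [wblock_eq_bF hN]
  refine ⟨by linarith, fun he n => ?_⟩
  have hle : bF G D u (n + 1) ≥ 1 := by
    by_cases hn : n + 1 ≤ N
    · have := hanti hn; linarith
    · have := wblock_eq_bF (N := n + 1) (G := G) (D := D) (u := u) fun m hm => hN m (by omega)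
      rw [wblock_eq_bF hN] at this; linarith
  have h3 := hanti (Nat.zero_le n)
  rw [bF_zero] at h3
  rw [bF_succ] at hle
  have h2 : (0 : ℝ) < (1 / 2) ^ (n + 1) := by positivity
  have h4 : (2 * (bA G D u n).card : ℝ) ≤ (bS G D u (n + 1)).card := by
    by_contra hc
    push Not at hc
    nlinarith
  exact le_antisymm (h n) (by exact_mod_cast h4)

lemma mem_bA {n : ℕ} {v : V} : v ∈ bA G D u n ↔ v ∈ bS G D u n ∧ v ∉ D := by
  simp [bA]

open Classical in
/-- number of children. -/
noncomputable def bch (G : SimpleGraph V) (D : Finset V) (u : V) (n : ℕ) (v : V) : Finset V :=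
  (bS G D u (n + 1)).filter (fun w => G.Adj v w)

open Classical in
/-- number of parents. -/
noncomputable def bpa (G : SimpleGraph V) (D : Finset V) (u : V) (n : ℕ) (w : V) : Finset V :=
  (bA G D u n).filter (fun v => G.Adj v w)

lemma double_count (n : ℕ) :
    ∑ v ∈ bA G D u n, (bch G D u n v).card = ∑ w ∈ bS G D u (n + 1), (bpa G D u n w).card := by
  classical
  exact Finset.sum_card_bipartiteAbove_eq_sum_card_bipartiteBelow (s := bA G D u n)
    (t := bS G D u (n + 1)) G.Adj

lemma bpa_pos {n : ℕ} {w : V} (hw : w ∈ bS G D u (n + 1)) : 1 ≤ (bpa G D u n w).card := by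
  obtain ⟨v, hv, hD, ha⟩ := bS_parent hw
  exact Finset.card_pos.2 ⟨v, by simp [bpa, mem_bA, hv, hD, ha]⟩

lemma card_eq_of {n : ℕ} (h1 : ∀ v ∈ bA G D u n, (bch G D u n v).card = 2)
    (h2 : ∀ w ∈ bS G D u (n + 1), (bpa G D u n w).card = 1) :
    (bS G D u (n + 1)).card = 2 * (bA G D u n).card := by
  have := double_count (G := G) (D := D) (u := u) n
  rw [Finset.sum_congr rfl h1, Finset.sum_congr rfl h2] at this
  simp at this; omega

lemma card_le_of {n : ℕ} (h1 : ∀ v ∈ bA G D u n, (bch G D u n v).card ≤ 2) :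
    (bS G D u (n + 1)).card ≤ 2 * (bA G D u n).card ∧
    ((bS G D u (n + 1)).card = 2 * (bA G D u n).card →
      (∀ v ∈ bA G D u n, (bch G D u n v).card = 2) ∧
      ∀ w ∈ bS G D u (n + 1), (bpa G D u n w).card = 1) := by
  have hd := double_count (G := G) (D := D) (u := u) n
  have ha := Finset.sum_le_sum h1
  have hb := Finset.sum_le_sum fun w (hw : w ∈ bS G D u (n + 1)) => bpa_pos hw
  have ea : ∑ v ∈ bA G D u n, 2 = 2 * (bA G D u n).card := by simp [mul_comm]
  have eb : ∑ v ∈ bS G D u (n + 1), 1 = (bS G D u (n + 1)).card := by simp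
  refine ⟨by omega, fun he => ⟨?_, ?_⟩⟩
  · exact (Finset.sum_eq_sum_iff_of_le h1).1 (by omega)
  · intro w hw
    exact ((Finset.sum_eq_sum_iff_of_le fun w hw => bpa_pos hw).1 (by omega) w hw).symm

open Classical in
/-- The neighbourhood as a finset. -/
noncomputable def bN (G : SimpleGraph V) (v : V) : Finset V := univ.filter (fun w => G.Adj v w)

lemma mem_bN {v w : V} : w ∈ bN G v ↔ G.Adj v w := by simp [bN]

lemma mem_bch {n : ℕ} {v w : V} : w ∈ bch G D u n v ↔ w ∈ bS G D u (n + 1) ∧ G.Adj v w := by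
  simp [bch]

lemma mem_bpa {n : ℕ} {v w : V} :
    v ∈ bpa G D u n w ↔ (v ∈ bS G D u n ∧ v ∉ D) ∧ G.Adj v w := by
  simp [bpa, mem_bA]

lemma bch_le (h3 : ∀ v, (bN G v).card ≤ 3) (h2 : (bN G u).card ≤ 2) (n : ℕ) :
    ∀ v ∈ bA G D u n, (bch G D u n v).card ≤ 2 := by
  classical
  intro v hv
  have hsub : bch G D u n v ⊆ bN G v := fun w hw => mem_bN.2 (mem_bch.1 hw).2
  cases n with
  | zero =>
    have : v = u := by simpa [mem_bA, bS_zero] using (mem_bA.1 hv).1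
    subst this
    exact (Finset.card_le_card hsub).trans h2
  | succ n =>
    obtain ⟨x, hx, -, ha⟩ := bS_parent (mem_bA.1 hv).1
    have hxn : x ∉ bch G D u (n + 1) v := fun h => by
      have := bS_unique hx (mem_bch.1 h).1; omega
    have : (insert x (bch G D u (n + 1) v)).card ≤ 3 :=
      (Finset.card_le_card (Finset.insert_subset (mem_bN.2 ha.symm) hsub)).trans (h3 v)
    rw [Finset.card_insert_of_notMem hxn] at this
    omega

lemma bS_walk {m : ℕ} : ∀ {w : V}, w ∈ bS G D u m →
    ∃ p : G.Walk u w, ∀ x ∈ p.support, x = w ∨ ∃ k < m, x ∈ bS G D u k := by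
  induction m with
  | zero =>
    intro w hw
    have : w = u := by simpa [bS_zero] using hw
    subst this
    exact ⟨.nil, by simp⟩
  | succ m ih =>
    intro w hw
    obtain ⟨v, hv, -, ha⟩ := bS_parent hw
    obtain ⟨p, hp⟩ := ih hv
    refine ⟨p.concat ha, fun x hx => ?_⟩
    rw [Walk.support_concat] at hx
    rcases (by simpa using hx : x ∈ p.support ∨ x = w) with h1 | h1
    · right
      rcases hp x h1 with rfl | ⟨k, hk, hxk⟩
      · exact ⟨m, by omega, hv⟩
      · exact ⟨k, by omega, hxk⟩
    · exact Or.inl h1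

lemma acyclic_parent (hG : G.IsAcyclic) {n m₁ m₂ : ℕ} {v w₁ w₂ : V} (hv : v ∈ bS G D u n)
    (h1 : w₁ ∈ bS G D u m₁) (h2 : w₂ ∈ bS G D u m₂) (hm1 : m₁ ≤ n) (hm2 : m₂ ≤ n)
    (ha1 : G.Adj w₁ v) (ha2 : G.Adj w₂ v) : w₁ = w₂ := by
  classical
  have key : ∀ {w m}, w ∈ bS G D u m → m ≤ n → G.Adj w v →
      ∃ p : G.Walk u w, p.IsPath ∧ v ∉ p.support := by
    intro w m hw hm ha
    obtain ⟨p, hp⟩ := bS_walk hw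
    refine ⟨p.bypass, p.bypass_isPath, fun hvp => ?_⟩
    rcases hp v (p.support_bypass_subset_support hvp) with h | ⟨k, hk, hvk⟩
    · exact ha.ne h.symm
    · have := bS_unique hv hvk; omega
  obtain ⟨p, hp, hvp⟩ := key h1 hm1 ha1
  obtain ⟨q, hq, hvq⟩ := key h2 hm2 ha2
  have := (hG.subsingleton_path u v).elim ⟨p.concat ha1, hp.concat hvp ha1⟩ ⟨q.concat ha2, hq.concat hvq ha2⟩
  have h := congrArg (fun r : G.Path u v => r.1.penultimate) this
  simpa using h

lemma acyclic_wblock (hG : G.IsAcyclic) (h2 : u ∉ D → (bN G u).card = 2)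
    (h3 : ∀ v, v ∉ D → v ≠ u → (bN G v).card = 3) : wblock G D u = 2 := by
  classical
  apply wblock_eq_two
  intro n
  apply card_eq_of
  · intro v hv
    obtain ⟨hv, hD⟩ := mem_bA.1 hv
    cases n with
    | zero =>
      have : v = u := by simpa [bS_zero] using hv
      subst this
      rw [← h2 hD]
      congr 1
      ext w
      rw [mem_bch, mem_bN]
      refine ⟨fun h => h.2, fun h => ⟨?_, h⟩⟩
      obtain ⟨m, hm, hw⟩ := bS_child hv hD h
      rcases (by omega : m = 0 ∨ m = 1) with rfl | rfl
      · have : w = v := by simpa [bS_zero] using hw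
        exact absurd this.symm h.ne
      · exact hw
    | succ n =>
      have hvu : v ≠ u := by
        rintro rfl
        have := bS_unique hv (m := 0) (by simp [bS_zero]); omega
      obtain ⟨x, hx, -, ha⟩ := bS_parent hv
      have hxn : x ∉ bch G D u (n + 1) v := fun h => by
        have := bS_unique hx (mem_bch.1 h).1; omega
      have : insert x (bch G D u (n + 1) v) = bN G v := by
        ext w
        rw [mem_insert, mem_bch, mem_bN]
        constructor
        · rintro (rfl | h)
          · exact ha.symm
          · exact h.2
        · intro h
          obtain ⟨m, hm, hw⟩ := bS_child hv hD h
          rcases (by omega : m ≤ n + 1 ∨ m = n + 1 + 1) with hm | rfl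
          · left
            exact acyclic_parent hG hv hw hx hm (by omega) h.symm ha
          · exact Or.inr ⟨hw, h⟩
      have hc := h3 v hD hvu
      rw [← this, Finset.card_insert_of_notMem hxn] at hc
      omega
  · intro w hw
    apply le_antisymm _ (bpa_pos hw)
    rw [Finset.card_le_one]
    intro a ha b hb
    rw [mem_bpa] at ha hb
    exact acyclic_parent hG hw ha.1.1 hb.1.1 (by omega) (by omega) ha.2 hb.2

end layers

lemma halfPow_anti {a b : ℕ∞} (h : a ≤ b) : halfPow b ≤ halfPow a := by
  unfold halfPow
  by_cases hb : b = ⊤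
  · rw [if_pos hb]; split_ifs <;> positivity
  · have ha : a ≠ ⊤ := ne_top_of_le_ne_top hb h
    rw [if_neg hb, if_neg ha]
    have : a.toNat ≤ b.toNat := ENat.toNat_le_toNat h hb
    have := pow_le_pow_of_le_one (by norm_num : (0 : ℝ) ≤ 1 / 2) (by norm_num) this
    linarith

lemma halfPow_nonneg (a : ℕ∞) : 0 ≤ halfPow a := by
  unfold halfPow; split_ifs <;> positivity

open Classical in
lemma wblock_sub {G : SimpleGraph V} (H : G.Subgraph) (D : Finset V) (u : H.verts) :
    wblock H.coe (D.subtype (· ∈ H.verts)) u ≤ wblock G D u := by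
  unfold wblock
  calc _ ≤ ∑ v ∈ D.subtype (· ∈ H.verts), halfPow (mdist G D u v) := by
        refine Finset.sum_le_sum fun v hv => halfPow_anti ?_
        apply le_sInf
        rintro _ ⟨p, ⟨hp, hvD, hs⟩, rfl⟩
        have hs2 : ∀ w ∈ (p.map H.hom).support, w ∈ D → w = H.hom v := by
          intro w hw hwD
          rw [Walk.support_map, List.mem_map] at hw
          obtain ⟨x, hx, rfl⟩ := hw
          rw [hs x hx (by simpa using hwD)]
        exact sInf_le ⟨p.map H.hom, ⟨hp.map H.hom_injective, by simpa using hvD, hs2⟩,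
          congrArg Nat.cast (p.length_map H.hom)⟩
    _ = ∑ v ∈ D.filter (· ∈ H.verts), halfPow (mdist G D u v) := by
        rw [← Finset.subtype_map, Finset.sum_map]; rfl
    _ ≤ _ := Finset.sum_le_sum_of_subset_of_nonneg (Finset.filter_subset _ _)
        fun _ _ _ => halfPow_nonneg _

lemma wblock_ge_of_witness [Fintype V] {G : SimpleGraph V} {D : Finset V} {u : V}
    (h : IsFullBinaryWitness G D u) : 2 ≤ wblock G D u := by
  classical
  obtain ⟨H, huH, -, htree, h0, h1, hD⟩ := h
  have hcard : ∀ v : H.verts, (bN H.coe v).card = (H.neighborSet v).ncard := by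
    intro v
    rw [← Set.ncard_coe_finset, ← Set.ncard_image_of_injective _ Subtype.val_injective]
    congr 1
    ext w
    simp only [Set.mem_image, mem_coe, mem_bN, Subgraph.coe_adj, Subgraph.mem_neighborSet]
    exact ⟨fun ⟨x, hx, e⟩ => e ▸ hx, fun hw => ⟨⟨w, hw.snd_mem⟩, hw, rfl⟩⟩
  have hDv : ∀ v ∈ H.verts, v ∉ D → ¬ ((H.neighborSet v).ncard ≤ 1 ∧
        (v = u → (H.neighborSet v).ncard = 0)) := by
    intro v hv hvD hc
    have : v ∈ (↑D ∩ H.verts : Set V) := by rw [hD]; exact ⟨hv, hc⟩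
    exact hvD this.1
  have := wblock_sub H D ⟨u, huH⟩
  rw [acyclic_wblock htree.isAcyclic] at this
  · exact this
  · intro hu
    rw [hcard]
    have := hDv u huH (by simpa using hu)
    simp only [forall_const, not_and] at this
    have h5 : (H.neighborSet u).ncard ≠ 0 := fun h => this (by omega) h
    show (H.neighborSet u).ncard = 2
    omega
  · rintro ⟨v, hv⟩ hvD hvu
    rw [hcard]
    have hvu' : v ≠ u := fun h => hvu (Subtype.ext h)
    have h6 := hDv v hv (by simpa using hvD)
    have h7 := h1 v hv hvu'
    have h8 : ¬ (H.neighborSet v).ncard ≤ 1 := fun h => h6 ⟨h, fun e => absurd e hvu'⟩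
    show (H.neighborSet v).ncard = 3
    omega

/-- The parent relation of the layered structure. -/
def bP [Fintype V] (G : SimpleGraph V) (D : Finset V) (u x y : V) : Prop :=
  x ∉ D ∧ G.Adj x y ∧ ∃ n, x ∈ bS G D u n ∧ y ∈ bS G D u (n + 1)

/-- The subgraph spanned by the layers. -/
def bH [Fintype V] (G : SimpleGraph V) (D : Finset V) (u : V) : G.Subgraph where
  verts := {v | ∃ n, v ∈ bS G D u n}
  Adj x y := bP G D u x y ∨ bP G D u y x
  adj_sub := by
    rintro x y (h | h)
    · exact h.2.1
    · exact h.2.1.symm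
  edge_vert := by
    rintro x y (⟨-, -, n, h, -⟩ | ⟨-, -, n, -, h⟩)
    · exact ⟨n, h⟩
    · exact ⟨n + 1, h⟩
  symm := ⟨fun x y h => h.symm⟩

lemma bH_root [Fintype V] {G : SimpleGraph V} {D : Finset V} {u : V} : u ∈ (bH G D u).verts :=
  ⟨0, by simp [bS_zero]⟩

lemma bH_reach [Fintype V] {G : SimpleGraph V} {D : Finset V} {u : V} (n : ℕ) :
    ∀ (v : (bH G D u).verts), v.1 ∈ bS G D u n → (bH G D u).coe.Reachable ⟨u, bH_root⟩ v := by
  induction n with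
  | zero =>
    intro v hv
    have : v = ⟨u, bH_root⟩ := Subtype.ext (by simpa [bS_zero] using hv)
    rw [this]
  | succ n ih =>
    intro v hv
    obtain ⟨x, hx, hD, ha⟩ := bS_parent hv
    have hxv : bP G D u x v.1 := ⟨hD, ha, n, hx, hv⟩
    refine (ih ⟨x, n, hx⟩ hx).trans (Adj.reachable ?_)
    show bP G D u x v.1 ∨ bP G D u v.1 x
    exact Or.inl hxv

lemma bP_unique [Fintype V] {G : SimpleGraph V} {D : Finset V} {u : V}
    (hpa : ∀ n, ∀ w ∈ bS G D u (n + 1), (bpa G D u n w).card = 1) {x x' y : V}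
    (h : bP G D u x y) (h' : bP G D u x' y) : x = x' := by
  obtain ⟨hD, ha, n, hx, hy⟩ := h
  obtain ⟨hD', ha', n', hx', hy'⟩ := h'
  have := bS_unique hy hy'
  obtain rfl : n = n' := by omega
  exact Finset.card_le_one.1 (hpa n y hy).le x (mem_bpa.2 ⟨⟨hx, hD⟩, ha⟩) x'
    (mem_bpa.2 ⟨⟨hx', hD'⟩, ha'⟩)

lemma bH_tree [Fintype V] {G : SimpleGraph V} {D : Finset V} {u : V}
    (hpa : ∀ n, ∀ w ∈ bS G D u (n + 1), (bpa G D u n w).card = 1) : (bH G D u).coe.IsTree := by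
  classical
  refine ⟨?_, ?_⟩
  · have : Nonempty (bH G D u).verts := ⟨⟨u, bH_root⟩⟩
    refine ⟨fun v w => ?_⟩
    obtain ⟨n, hn⟩ := v.2
    obtain ⟨m, hm⟩ := w.2
    exact (bH_reach n v hn).symm.trans (bH_reach m w hm)
  · intro x c hc
    choose d hd using fun v : (bH G D u).verts => v.2
    obtain ⟨v, hv, hmax⟩ := Finset.exists_max_image c.support.toFinset d
      ⟨x, by simp⟩
    have hvs : v ∈ c.support := by simpa using hv
    have hc' : (c.rotate v hvs).IsCycle := by simpa using hc
    have key : ∀ y, y ∈ (c.rotate v hvs).support → (bH G D u).coe.Adj v y →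
        bP G D u y.1 v.1 := by
      intro y hy hadj
      have hy' : y ∈ c.support := by simpa using hy
      have hle := hmax y (by simpa using hy')
      have hadj' : bP G D u v.1 y.1 ∨ bP G D u y.1 v.1 := hadj
      rcases hadj' with h | h
      · obtain ⟨-, -, n, h1, h2⟩ := h
        have e1 := bS_unique h1 (hd v)
        have e2 := bS_unique h2 (hd y)
        omega
      · exact h
    have hn : ¬ (c.rotate v hvs).Nil := hc'.not_nil
    have h1 := key _ (Walk.getVert_mem_support _ _) (Walk.adj_snd hn)
    have h2 := key _ (Walk.getVert_mem_support _ _) (Walk.adj_penultimate hn).symm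
    exact hc'.snd_ne_penultimate (Subtype.ext (bP_unique hpa h1 h2))

lemma bH_ncard [Fintype V] {G : SimpleGraph V} {D : Finset V} {u : V}
    (hch : ∀ n, ∀ v ∈ bA G D u n, (bch G D u n v).card = 2)
    (hpa : ∀ n, ∀ w ∈ bS G D u (n + 1), (bpa G D u n w).card = 1) {v : V}
    (hv : v ∈ (bH G D u).verts) :
    ∃ a b, ((bH G D u).neighborSet v).ncard = a + b ∧ (v ∈ D → a = 0) ∧ (v ∉ D → a = 2) ∧
      (v = u → b = 0) ∧ (v ≠ u → b = 1) := by
  classical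
  obtain ⟨n, hn⟩ := hv
  refine ⟨{w | bP G D u v w}.ncard, {w | bP G D u w v}.ncard, ?_, ?_, ?_, ?_, ?_⟩
  · rw [← Set.ncard_union_eq ?_ (Set.toFinite _) (Set.toFinite _)]
    · rfl
    · rw [Set.disjoint_left]
      rintro w ⟨-, -, k, h1, h2⟩ ⟨-, -, l, h3, h4⟩
      have e1 := bS_unique h1 h4
      have e2 := bS_unique h2 h3
      omega
  · intro hD
    have : {w | bP G D u v w} = ∅ := by
      ext w; simp [bP, hD]
    simp [this]
  · intro hD
    rw [← hch n v (mem_bA.2 ⟨hn, hD⟩), ← Set.ncard_coe_finset]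
    congr 1
    ext w
    simp only [Set.mem_ofPred_eq, mem_coe, mem_bch]
    constructor
    · rintro ⟨-, ha, k, h1, h2⟩
      obtain rfl := bS_unique h1 hn
      exact ⟨h2, ha⟩
    · rintro ⟨h, ha⟩
      exact ⟨hD, ha, n, hn, h⟩
  · rintro rfl
    have : {w | bP G D v w v} = ∅ := by
      ext w
      simp only [Set.mem_ofPred_eq, Set.mem_empty_iff_false, iff_false]
      rintro ⟨-, -, k, -, h⟩
      have := bS_unique h (m := 0) (by simp [bS_zero])
      omega
    simp [this]
  · intro hvu
    cases n with
    | zero => exact absurd (by simpa [bS_zero] using hn) hvu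
    | succ n =>
      rw [← hpa n v hn, ← Set.ncard_coe_finset]
      congr 1
      ext w
      simp only [Set.mem_ofPred_eq, mem_coe, mem_bpa]
      constructor
      · rintro ⟨hD, ha, k, h1, h2⟩
        have := bS_unique h2 hn
        obtain rfl : k = n := by omega
        exact ⟨⟨h1, hD⟩, ha⟩
      · rintro ⟨⟨h, hD⟩, ha⟩
        exact ⟨hD, ha, n, h, hn⟩

lemma bH_witness [Fintype V] {G : SimpleGraph V} {D : Finset V} {u : V}
    (hch : ∀ n, ∀ v ∈ bA G D u n, (bch G D u n v).card = 2)
    (hpa : ∀ n, ∀ w ∈ bS G D u (n + 1), (bpa G D u n w).card = 1) :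
    IsFullBinaryWitness G D u := by
  refine ⟨bH G D u, bH_root, Set.toFinite _, bH_tree hpa, ?_, ?_, ?_⟩
  · obtain ⟨a, b, h, h1, h2, h3, h4⟩ := bH_ncard hch hpa (bH_root (G := G) (D := D) (u := u))
    rw [h, h3 rfl]
    by_cases hD : u ∈ D
    · left; rw [h1 hD]
    · right; rw [h2 hD]
  · intro v hv hvu
    obtain ⟨a, b, h, h1, h2, h3, h4⟩ := bH_ncard hch hpa hv
    rw [h, h4 hvu]
    by_cases hD : v ∈ D
    · left; rw [h1 hD]
    · right; rw [h2 hD]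
  · ext v
    simp only [Set.mem_inter_iff, mem_coe, Set.mem_ofPred_eq]
    constructor
    · rintro ⟨hD, hv⟩
      obtain ⟨a, b, h, h1, h2, h3, h4⟩ := bH_ncard hch hpa hv
      refine ⟨hv, ?_, fun e => by rw [h, h1 hD, h3 e]⟩
      by_cases e : v = u
      · rw [h, h1 hD, h3 e]; omega
      · rw [h, h1 hD, h4 e]
    · rintro ⟨hv, hle, -⟩
      obtain ⟨a, b, h, h1, h2, h3, h4⟩ := bH_ncard hch hpa hv
      refine ⟨?_, hv⟩
      by_contra hD
      rw [h, h2 hD] at hle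
      omega

/-- Lemma of Bessy et al.: if `G` is subcubic and `u` has degree at most 2, then
`w_{(G,D)}(u) ≤ 2`, with equality iff `u` lies in a full binary tree subgraph whose
leaves are exactly the vertices of `D` in it. -/
theorem stmt_17 {V : Type*} [Fintype V] (G : SimpleGraph V) [DecidableRel G.Adj]
    (hsub : Subcubic G) (D : Finset V) (u : V) (hu : G.degree u ≤ 2) :
    wblock G D u ≤ 2 ∧ (wblock G D u = 2 ↔ IsFullBinaryWitness G D u) := by
  classical
  have hN : ∀ v, (bN G v).card = G.degree v := by
    intro v
    rw [← G.card_neighborFinset_eq_degree]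
    congr 1
    ext w; simp [mem_bN]
  have hle := bch_le (D := D) (u := u) (fun v => (hN v).trans_le (hsub v)) ((hN u).trans_le hu)
  have hw := wblock_le_two fun n => (card_le_of (hle n)).1
  refine ⟨hw.1, fun h => ?_, fun h => le_antisymm hw.1 (wblock_ge_of_witness h)⟩
  have h2 := fun n => (card_le_of (hle n)).2 (hw.2 h n)
  exact bH_witness (fun n => (h2 n).1) (fun n => (h2 n).2)
end
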